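/- arXiv:2601.22845 — 3 statements merged into one kernel-verified Lean document; each statement's English description precedes it below -/
import Mathlib

section
/- Let N be a positive integer and let c, K > 0. Let M be an N×N real matrix such that ⟨Mξ, ξ⟩ ≥ c‖ξ‖² for every ξ ∈ ℝ^N (Euclidean inner product and norm), and such that |M i j| ≤ K/N whenever i ≠ j. Then M is invertible, every entry of M⁻¹ has absolute value at most 1/c, and there exists a constant C, depending only on c and K (in particular independent of N and of the indices), such that |(M⁻¹) i j| ≤ C/N whenever i ≠ j. -/
open scoped BigOperators

lemma coercive_column {c K : ℝ} (hc : 0 < c) (hK : 0 < K) (N : ℕ) (hN : 0 < N)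
    (M : Matrix (Fin N) (Fin N) ℝ)
    (hco : ∀ ξ : Fin N → ℝ, c * ∑ i, ξ i ^ 2 ≤ ∑ i, M.mulVec ξ i * ξ i)
    (hoff : ∀ i j, i ≠ j → |M i j| ≤ K / N) (x : Fin N → ℝ) (j : Fin N)
    (hx : M.mulVec x = Pi.single j 1) :
    (∀ i, |x i| ≤ 1 / c) ∧
      ∀ i, i ≠ j → |x i| ≤ (K / c * (1 / c + K / c ^ 2)) / N := by
  have hN' : (0 : ℝ) < N := by exact_mod_cast hN
  have hKN : 0 < K / N := by positivity
  have h1 : ∀ i, |x i| ≤ 1 / c := by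
    have h := hco x
    have e : ∑ i, M.mulVec x i * x i = x j := by
      rw [hx]; simp [Pi.single_apply]
    rw [e] at h
    have hi : ∀ i, c * x i ^ 2 ≤ x j := fun i =>
      le_trans (mul_le_mul_of_nonneg_left
        (Finset.single_le_sum (f := fun i => x i ^ 2) (fun k _ => sq_nonneg (x k))
          (Finset.mem_univ i)) hc.le) h
    have hj : x j ≤ 1 / c := by
      rw [le_div_iff₀ hc]
      have := hi j
      by_contra! hlt
      have : 0 < x j := by
        by_contra! h0
        nlinarith
      nlinarith
    intro i
    apply abs_le_of_sq_le_sq _ (by positivity)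
    have h2 := (hi i).trans hj
    have : x i ^ 2 ≤ 1 / c / c := by
      rw [le_div_iff₀ hc]; linarith
    calc x i ^ 2 ≤ 1 / c / c := this
      _ = (1 / c) ^ 2 := by field_simp
  refine ⟨h1, ?_⟩
  set S := ∑ k ∈ Finset.univ.erase j, |x k| with hS
  have hS0 : 0 ≤ S := Finset.sum_nonneg fun _ _ => abs_nonneg _
  have hrow : ∀ i, i ≠ j → ∑ k, M i k * x k = 0 := by
    intro i hij
    have := congrFun hx i
    simpa [Matrix.mulVec, dotProduct, Pi.single_apply, hij] using this
  have hSK : S ≤ K / c ^ 2 := by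
    set y : Fin N → ℝ := fun k => if k = j then 0 else x k with hy
    have hyc := hco y
    have hMy : ∀ i, i ≠ j → M.mulVec y i = - (M i j * x j) := by
      intro i hij
      have h := hrow i hij
      rw [← Finset.add_sum_erase _ _ (Finset.mem_univ j)] at h
      have : M.mulVec y i = ∑ k ∈ Finset.univ.erase j, M i k * x k := by
        simp only [Matrix.mulVec, dotProduct]
        rw [← Finset.add_sum_erase _ _ (Finset.mem_univ j)]
        have : M i j * y j = 0 := by simp [hy]
        rw [this, zero_add]
        refine Finset.sum_congr rfl fun k hk => ?_
        simp [hy, Finset.ne_of_mem_erase hk]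
      rw [this]; linarith
    have e1 : ∑ i, y i ^ 2 = ∑ k ∈ Finset.univ.erase j, |x k| ^ 2 := by
      rw [← Finset.add_sum_erase _ _ (Finset.mem_univ j)]
      have : y j ^ 2 = 0 := by simp [hy]
      rw [this, zero_add]
      refine Finset.sum_congr rfl fun k hk => ?_
      simp [hy, Finset.ne_of_mem_erase hk]
    have e2 : ∑ i, M.mulVec y i * y i ≤ K / N * (1 / c) * S := by
      rw [← Finset.add_sum_erase _ _ (Finset.mem_univ j)]
      have : M.mulVec y j * y j = 0 := by simp [hy]
      rw [this, zero_add, hS, Finset.mul_sum]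
      refine Finset.sum_le_sum fun k hk => ?_
      have hk := Finset.ne_of_mem_erase hk
      rw [hMy k hk]
      have : y k = x k := by simp [hy, hk]
      rw [this]
      refine (le_abs_self _).trans ?_
      rw [abs_mul, abs_neg, abs_mul]
      gcongr
      · exact hoff k j hk
      · exact h1 j
    have e3 : S ^ 2 ≤ N * ∑ k ∈ Finset.univ.erase j, |x k| ^ 2 := by
      refine (sq_sum_le_card_mul_sum_sq).trans ?_
      gcongr
      exact (Finset.card_le_univ _).trans (by simp)
    rw [e1] at hyc
    have e4 : c * S ^ 2 ≤ K / c * S := by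
      calc c * S ^ 2 ≤ c * (N * ∑ k ∈ Finset.univ.erase j, |x k| ^ 2) := by gcongr
        _ = N * (c * ∑ k ∈ Finset.univ.erase j, |x k| ^ 2) := by ring
        _ ≤ N * (K / N * (1 / c) * S) :=
          mul_le_mul_of_nonneg_left (hyc.trans e2) hN'.le
        _ = K / c * S := by field_simp
    rcases hS0.eq_or_lt with h0 | h0
    · rw [← h0]; positivity
    · have : c * S ≤ K / c := by
        refine le_of_mul_le_mul_right ?_ h0
        linarith
      calc S = c * S / c := by field_simp
        _ ≤ K / c / c := by gcongr
        _ = K / c ^ 2 := by field_simp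
  intro i hij
  have hdiag : c ≤ M i i := by
    have := hco (Pi.single i 1)
    simpa [Pi.single_apply] using this
  have h := hrow i hij
  rw [← Finset.add_sum_erase _ _ (Finset.mem_univ i)] at h
  have hsum : |∑ k ∈ Finset.univ.erase i, M i k * x k| ≤ K / N * (1 / c + K / c ^ 2) := by
    calc _ ≤ ∑ k ∈ Finset.univ.erase i, |M i k * x k| := Finset.abs_sum_le_sum_abs _ _
      _ ≤ ∑ k ∈ Finset.univ.erase i, K / N * |x k| := by
        refine Finset.sum_le_sum fun k hk => ?_
        rw [abs_mul]
        gcongr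
        exact hoff i k (Finset.ne_of_mem_erase hk).symm
      _ ≤ ∑ k, K / N * |x k| :=
        Finset.sum_le_sum_of_subset_of_nonneg (Finset.subset_univ _)
          fun _ _ _ => by positivity
      _ = K / N * (|x j| + S) := by
        rw [← Finset.mul_sum, ← Finset.add_sum_erase _ _ (Finset.mem_univ j)]
      _ ≤ _ := by
        gcongr
        exact h1 j
  have hm : c * |x i| ≤ K / N * (1 / c + K / c ^ 2) := by
    calc c * |x i| ≤ M i i * |x i| := by gcongr
      _ = |M i i * x i| := by rw [abs_mul, abs_of_pos (hc.trans_le hdiag)]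
      _ = |∑ k ∈ Finset.univ.erase i, M i k * x k| := by
        rw [eq_neg_of_add_eq_zero_left h, abs_neg]
      _ ≤ _ := hsum
  calc |x i| = c * |x i| / c := by field_simp
    _ ≤ K / N * (1 / c + K / c ^ 2) / c := by gcongr
    _ = _ := by field_simp

/-- a coercive N×N matrix with O(1/N) off-diagonal entries is invertible,
the entries of its inverse are bounded by 1/c, and the off-diagonal entries of the
inverse are bounded by C/N with C depending only on c and K. -/
theorem coercive_matrix_inverse_entry_bounds (c K : ℝ) (hc : 0 < c) (hK : 0 < K) :
    ∃ C : ℝ, ∀ (N : ℕ), 0 < N → ∀ M : Matrix (Fin N) (Fin N) ℝ,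
      (∀ ξ : Fin N → ℝ, c * ∑ i, ξ i ^ 2 ≤ ∑ i, M.mulVec ξ i * ξ i) →
      (∀ i j, i ≠ j → |M i j| ≤ K / N) →
      IsUnit M ∧ (∀ i j, |M⁻¹ i j| ≤ 1 / c) ∧
        (∀ i j, i ≠ j → |M⁻¹ i j| ≤ C / N) := by
  refine ⟨K / c * (1 / c + K / c ^ 2), fun N hN M hco hoff => ?_⟩
  have hu : IsUnit M := by
    rw [← Matrix.mulVec_injective_iff_isUnit]
    intro a b hab
    have hz : M.mulVec (a - b) = 0 := by
      rw [Matrix.mulVec_sub, sub_eq_zero]; exact hab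
    have h := hco (a - b)
    rw [hz] at h
    simp only [Pi.zero_apply, zero_mul, Finset.sum_const_zero] at h
    have h0 : ∑ i, (a - b) i ^ 2 = 0 :=
      le_antisymm (by by_contra! hlt; nlinarith [mul_pos hc hlt])
        (Finset.sum_nonneg fun _ _ => sq_nonneg _)
    rw [Finset.sum_eq_zero_iff_of_nonneg fun _ _ => sq_nonneg _] at h0
    funext i
    have := h0 i (Finset.mem_univ i)
    exact sub_eq_zero.mp (by simpa using this)
  have hcol : ∀ j, M.mulVec (fun i => M⁻¹ i j) = Pi.single j 1 := by
    intro j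
    have hmul : M * M⁻¹ = 1 := Matrix.mul_nonsing_inv _ ((Matrix.isUnit_iff_isUnit_det _).mp hu)
    funext i
    have := congrFun (congrFun hmul i) j
    rw [Matrix.mul_apply] at this
    simp only [Matrix.mulVec, dotProduct]
    rw [this, Matrix.one_apply, Pi.single_apply]
  exact ⟨hu, fun i j => (coercive_column hc hK N hN M hco hoff _ j (hcol j)).1 i,
    fun i j hij => (coercive_column hc hK N hN M hco hoff _ j (hcol j)).2 i hij⟩
end

section
/- Let c, K > 0 and let s be a positive integer. There exists a constant C, depending only on c, K and s (in particular independent of N), with the following property. Let N be a positive integer and let M be an N×N real matrix with ⟨Mξ, ξ⟩ ≥ c‖ξ‖² for every ξ ∈ ℝ^N and |M i j| ≤ K/N for all i ≠ j. Let S ⊆ {1,…,N} be a nonempty subset with |S| ≤ s, let τ ≥ 0, and let y, t ∈ ℝ^N satisfy M y = t and |t i| ≤ τ · N^{1−|S∪{i}|} for every i ∈ {1,…,N}. Then |y i| ≤ C · τ · N^{1−|S∪{i}|} for every i ∈ {1,…,N}. -/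
open scoped BigOperators

/-- Core estimate with `A = τ N^{1-|S|}`. -/
lemma core_decay (c K : ℝ) (hc : 0 < c) (hK : 0 < K) (s : ℕ) (N : ℕ) (hN : 0 < N)
    (M : Matrix (Fin N) (Fin N) ℝ)
    (hM : ∀ ξ : Fin N → ℝ, c * ∑ i, ξ i ^ 2 ≤ ∑ i, M.mulVec ξ i * ξ i)
    (hoff : ∀ i j, i ≠ j → |M i j| ≤ K / N)
    (S : Finset (Fin N)) (hS : S.card ≤ s) (A : ℝ) (hA : 0 ≤ A) (y : Fin N → ℝ)
    (h1 : ∀ i ∈ S, |M.mulVec y i| ≤ A) (h2 : ∀ i, i ∉ S → |M.mulVec y i| ≤ A / N) :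
    (∀ i ∈ S, |y i| ≤ (s + 1) / c * A) ∧
    (∀ i, i ∉ S → |y i| ≤ (1 + K * s * ((s + 1) / c)) * (1 + K / c) / c * (A / N)) := by
  have hNr : (0 : ℝ) < N := by exact_mod_cast hN
  have hN1 : (1 : ℝ) ≤ N := by exact_mod_cast hN
  have hSr : (S.card : ℝ) ≤ s := by exact_mod_cast hS
  -- diagonal entries
  have hdiag : ∀ i, c ≤ M i i := by
    intro i
    have h := hM (Pi.single i 1)
    simpa [Pi.single_apply, ite_pow] using h
  -- `ℓ²` bound on `t`
  have ht2 : ∑ i, (M.mulVec y i) ^ 2 ≤ A ^ 2 * (s + 1) := by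
    have hb : ∀ i, (M.mulVec y i) ^ 2 ≤ (if i ∈ S then A ^ 2 else 0) + A ^ 2 / N := by
      intro i
      split_ifs with hi
      · have := sq_le_sq' (by linarith [abs_le.1 (h1 i hi)]) (abs_le.1 (h1 i hi)).2
        have : 0 ≤ A ^ 2 / N := by positivity
        linarith
      · have h3 := sq_le_sq' (by linarith [abs_le.1 (h2 i hi)]) (abs_le.1 (h2 i hi)).2
        have : (A / N) ^ 2 ≤ A ^ 2 / N := by
          rw [div_pow]
          apply div_le_div_of_nonneg_left (by positivity) hNr
          nlinarith
        linarith
    calc _ ≤ ∑ i, ((if i ∈ S then A ^ 2 else 0) + A ^ 2 / N) := Finset.sum_le_sum fun i _ => hb i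
      _ = S.card * A ^ 2 + A ^ 2 := by
        rw [Finset.sum_add_distrib]
        simp
        field_simp
      _ ≤ _ := by nlinarith [sq_nonneg A]
  have hy2 : c ^ 2 * ∑ i, y i ^ 2 ≤ A ^ 2 * (s + 1) := by
    have h := hM y
    have h3 : ∑ i, M.mulVec y i * y i ≤
        ∑ i, ((M.mulVec y i) ^ 2 / (2 * c) + c / 2 * y i ^ 2) := by
      apply Finset.sum_le_sum
      intro i _
      have : (M.mulVec y i) ^ 2 / (2 * c) + c / 2 * y i ^ 2 - M.mulVec y i * y i
        = (M.mulVec y i - c * y i) ^ 2 / (2 * c) := by field_simp; ring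
      have : 0 ≤ (M.mulVec y i - c * y i) ^ 2 / (2 * c) := by positivity
      linarith
    rw [Finset.sum_add_distrib, ← Finset.sum_div, ← Finset.mul_sum] at h3
    have h4 : c / 2 * ∑ i, y i ^ 2 ≤ (∑ i, (M.mulVec y i) ^ 2) / (2 * c) := by linarith
    rw [le_div_iff₀ (by positivity)] at h4
    nlinarith
  have hyB : ∀ i, |y i| ≤ (s + 1) / c * A := by
    intro i
    have h3 : y i ^ 2 ≤ ∑ i, y i ^ 2 :=
      Finset.single_le_sum (f := fun i => y i ^ 2) (fun i _ => sq_nonneg _) (Finset.mem_univ i)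
    have h4 : (c * y i) ^ 2 ≤ ((s + 1) * A) ^ 2 := by
      have h5 : c ^ 2 * y i ^ 2 ≤ c ^ 2 * ∑ i, y i ^ 2 := by gcongr
      have hs0 : (0 : ℝ) ≤ s := Nat.cast_nonneg s
      have : A ^ 2 * (s + 1) ≤ A ^ 2 * (s + 1) ^ 2 := by gcongr; nlinarith
      nlinarith
    have h5 := abs_le_of_sq_le_sq h4 (by positivity)
    have h6 : |c * y i| ≤ (s + 1) * A := h5
    rw [abs_mul, abs_of_pos hc] at h6
    rw [div_mul_eq_mul_div, le_div_iff₀ hc]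
    linarith
  refine ⟨fun i _ => hyB i, ?_⟩
  set z : Fin N → ℝ := fun i => if i ∈ S then 0 else y i with hz
  set D : ℝ := (1 + K * s * ((s + 1) / c)) * A with hD
  have hD0 : 0 ≤ D := by positivity
  have hMz : ∀ i, i ∉ S → |M.mulVec z i| ≤ D / N := by
    intro i hi
    have e : M.mulVec z i = M.mulVec y i - ∑ j ∈ S, M i j * y j := by
      rw [eq_sub_iff_add_eq]
      simp only [Matrix.mulVec, dotProduct]
      rw [← Finset.sum_filter_add_sum_filter_not Finset.univ (· ∈ S) (fun j => M i j * y j)]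
      simp [hz, Finset.sum_ite, add_comm]
    have h3 : |∑ j ∈ S, M i j * y j| ≤ s * (K / N * ((s + 1) / c * A)) := by
      calc _ ≤ ∑ j ∈ S, |M i j * y j| := Finset.abs_sum_le_sum_abs _ _
        _ ≤ ∑ j ∈ S, (K / N * ((s + 1) / c * A)) := by
          apply Finset.sum_le_sum
          intro j hj
          rw [abs_mul]
          have : i ≠ j := fun h => hi (h ▸ hj)
          exact mul_le_mul (hoff i j this) (hyB j) (abs_nonneg _) (by positivity)
        _ = S.card * (K / N * ((s + 1) / c * A)) := by simp
        _ ≤ _ := by gcongr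
    rw [e]
    calc _ ≤ _ := abs_sub _ _
      _ ≤ A / N + s * (K / N * ((s + 1) / c * A)) := add_le_add (h2 i hi) h3
      _ = D / N := by rw [hD]; field_simp
  have hz1 : c * ∑ i, |z i| ≤ D := by
    have h := hM z
    have h3 : ∑ i, M.mulVec z i * z i ≤ D / N * ∑ i, |z i| := by
      rw [Finset.mul_sum]
      apply Finset.sum_le_sum
      intro i _
      by_cases hi : i ∈ S
      · simp [hz, hi]
      · refine (le_abs_self _).trans ?_
        rw [abs_mul]
        exact mul_le_mul_of_nonneg_right (hMz i hi) (abs_nonneg _)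
    have h4 : (∑ i, |z i|) ^ 2 ≤ N * ∑ i, z i ^ 2 := by
      have := sq_sum_le_card_mul_sum_sq (s := Finset.univ) (f := fun i => |z i|)
      simpa using this
    have hx0 : 0 ≤ ∑ i, |z i| := Finset.sum_nonneg fun i _ => abs_nonneg _
    have h5 : N * (c * ∑ i, z i ^ 2) ≤ D * ∑ i, |z i| := by
      calc _ ≤ N * (D / N * ∑ i, |z i|) := 
            mul_le_mul_of_nonneg_left (h.trans h3) hNr.le
        _ = _ := by field_simp
    have h6 : (c * ∑ i, |z i|) * ∑ i, |z i| ≤ D * ∑ i, |z i| := by nlinarith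
    rcases hx0.eq_or_lt with h7 | h7
    · rw [← h7]; simpa using hD0
    · exact le_of_mul_le_mul_right h6 h7
  intro i hi
  have hzi : z i = y i := by simp [hz, hi]
  have e : M i i * z i = M.mulVec z i - ∑ j ∈ Finset.univ.erase i, M i j * z j := by
    rw [eq_sub_iff_add_eq]
    simp only [Matrix.mulVec, dotProduct]
    rw [Finset.add_sum_erase _ (fun j => M i j * z j) (Finset.mem_univ i)]
  have h3 : |∑ j ∈ Finset.univ.erase i, M i j * z j| ≤ K / N * ∑ j, |z j| := by
    calc _ ≤ ∑ j ∈ Finset.univ.erase i, |M i j * z j| := Finset.abs_sum_le_sum_abs _ _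
      _ ≤ ∑ j ∈ Finset.univ.erase i, K / N * |z j| := by
        apply Finset.sum_le_sum
        intro j hj
        rw [abs_mul]
        exact mul_le_mul_of_nonneg_right (hoff i j (Finset.ne_of_mem_erase hj).symm) (abs_nonneg _)
      _ ≤ ∑ j, K / N * |z j| :=
        Finset.sum_le_sum_of_subset_of_nonneg (Finset.erase_subset _ _)
          fun j _ _ => by positivity
      _ = _ := by rw [Finset.mul_sum]
  have h4 : ∑ i, |z i| ≤ D / c := by
    rw [le_div_iff₀ hc]; linarith
  have h5 : c * |z i| ≤ D / N + K / N * (D / c) := by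
    calc c * |z i| ≤ M i i * |z i| := by gcongr; exact hdiag i
      _ = |M i i * z i| := by rw [abs_mul, abs_of_pos (hc.trans_le (hdiag i))]
      _ ≤ |M.mulVec z i| + |∑ j ∈ Finset.univ.erase i, M i j * z j| := by
        rw [e]; exact abs_sub _ _
      _ ≤ D / N + K / N * (D / c) := by
        refine add_le_add (hMz i hi) (h3.trans ?_)
        gcongr
  rw [← hzi]
  have h6 : |z i| ≤ (D / N + K / N * (D / c)) / c := by
    rw [le_div_iff₀ hc]; linarith
  refine h6.trans (le_of_eq ?_)
  rw [hD]; field_simp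

/-- weighted decay of solutions to coercive linear systems with O(1/N)
off-diagonal coupling: if `M y = t` with `|t i| ≤ τ · N^{1 - |S ∪ {i}|}`, then
`|y i| ≤ C · τ · N^{1 - |S ∪ {i}|}`, with `C` depending only on `c`, `K`, `s`. -/
theorem coercive_system_weighted_decay (c K : ℝ) (hc : 0 < c) (hK : 0 < K)
    (s : ℕ) (hs : 0 < s) :
    ∃ C : ℝ, ∀ (N : ℕ), 0 < N → ∀ M : Matrix (Fin N) (Fin N) ℝ,
      (∀ ξ : Fin N → ℝ, c * ∑ i, ξ i ^ 2 ≤ ∑ i, M.mulVec ξ i * ξ i) →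
      (∀ i j, i ≠ j → |M i j| ≤ K / N) →
      ∀ S : Finset (Fin N), S.Nonempty → S.card ≤ s →
      ∀ τ : ℝ, 0 ≤ τ →
      ∀ y t : Fin N → ℝ, M.mulVec y = t →
      (∀ i, |t i| ≤ τ * (N : ℝ) ^ ((1 : ℤ) - ((insert i S).card : ℤ))) →
      ∀ i, |y i| ≤ C * τ * (N : ℝ) ^ ((1 : ℤ) - ((insert i S).card : ℤ)) := by
  
  refine ⟨(s + 1) / c + (1 + K * s * ((s + 1) / c)) * (1 + K / c) / c, ?_⟩
  intro N hN M hM hoff S _ hS τ hτ y t hyt ht i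
  subst hyt
  have hNr : (0 : ℝ) < N := by exact_mod_cast hN
  set W : ℝ := (N : ℝ) ^ ((1 : ℤ) - (S.card : ℤ)) with hW
  have hW0 : 0 < W := by positivity
  have w1 : ∀ i ∈ S, (N : ℝ) ^ ((1 : ℤ) - ((insert i S).card : ℤ)) = W := by
    intro i hi
    rw [Finset.insert_eq_of_mem hi]
  have w2 : ∀ i, i ∉ S → (N : ℝ) ^ ((1 : ℤ) - ((insert i S).card : ℤ)) = W / N := by
    intro i hi
    rw [Finset.card_insert_of_notMem hi, hW, div_eq_mul_inv, ← zpow_sub_one₀ hNr.ne']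
    congr 1
    push_cast
    ring
  obtain ⟨k1, k2⟩ := core_decay c K hc hK s N hN M hM hoff S hS (τ * W) (by positivity) y
    (fun i hi => by have := ht i; rwa [w1 i hi] at this)
    (fun i hi => by have := ht i; rwa [w2 i hi, ← mul_div_assoc] at this)
  by_cases hi : i ∈ S
  · rw [w1 i hi]
    have := k1 i hi
    have h3 : 0 ≤ (1 + K * s * ((s + 1) / c)) * (1 + K / c) / c * (τ * W) := by positivity
    linarith
  · rw [w2 i hi]
    have := k2 i hi
    have h3 : 0 ≤ (s + 1) / c * (τ * (W / N)) := by positivity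
    rw [mul_div_assoc τ] at this
    linarith
end

section
/- Let n, m be positive integers, let c > 0, and let k ∈ ℕ ∪ {∞} with k ≥ 1. Let F : ℝ^n × ℝ^m → ℝ^m be of class C^k and uniformly strongly monotone in its second variable, i.e. ⟨F(x,a) − F(x,b), a − b⟩ ≥ c‖a − b‖² for all x ∈ ℝ^n and all a, b ∈ ℝ^m. Then there is exactly one map φ : ℝ^n × ℝ^m → ℝ^m such that F(x, φ(x,p)) = p for all (x,p) ∈ ℝ^n × ℝ^m; moreover φ is of class C^k, and for each fixed x the map p ↦ φ(x,p) is Lipschitz with constant 1/c. -/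
open scoped RealInnerProductSpace


section Helpers

variable {E V : Type*} [NormedAddCommGroup E] [NormedSpace ℝ E] [FiniteDimensional ℝ E]
  [NormedAddCommGroup V] [InnerProductSpace ℝ V] [FiniteDimensional ℝ V]

theorem gif_anti {c : ℝ} {F : E × V → V}
    (hmono : ∀ (x : E) (a b : V), c * ‖a - b‖ ^ 2 ≤ ⟪F (x, a) - F (x, b), a - b⟫)
    (x : E) (a b : V) : c * ‖a - b‖ ≤ ‖F (x, a) - F (x, b)‖ := by
  by_cases h : ‖a - b‖ = 0
  · rw [h]; simp
  · have hpos : 0 < ‖a - b‖ := lt_of_le_of_ne (norm_nonneg _) (Ne.symm h)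
    have h1 := (hmono x a b).trans (real_inner_le_norm _ _)
    refine le_of_mul_le_mul_right ?_ hpos
    nlinarith

theorem gif_equiv {c : ℝ} (hc : 0 < c) {F : E × V → V}
    (hmono : ∀ (x : E) (a b : V), c * ‖a - b‖ ^ 2 ≤ ⟪F (x, a) - F (x, b), a - b⟫)
    (hF : Differentiable ℝ F) (z : E × V) :
    ∃ A : (E × V) ≃L[ℝ] (E × V),
      HasFDerivAt (fun w : E × V => (w.1, F w)) (A : (E × V) →L[ℝ] (E × V)) z := by
  obtain ⟨x, a⟩ := z
  have hL : HasFDerivAt F (fderiv ℝ F (x, a)) (x, a) := (hF (x, a)).hasFDerivAt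
  set L := fderiv ℝ F (x, a) with hLdef
  set M : (E × V) →L[ℝ] (E × V) := (ContinuousLinearMap.fst ℝ E V).prod L with hM
  have hG : HasFDerivAt (fun w : E × V => (w.1, F w)) M (x, a) :=
    hasFDerivAt_fst.prodMk hL
  have hLv : ∀ v : V, L (0, v) = 0 → v = 0 := by
    intro v hv
    have hcurve : HasDerivAt (fun t : ℝ => ((x, a + t • v) : E × V)) (0, v) 0 := by
      refine (hasDerivAt_const (0 : ℝ) x).prodMk ?_
      simpa using ((hasDerivAt_id (0 : ℝ)).smul_const v).const_add a
    have hL' : HasFDerivAt F L ((fun t : ℝ => ((x, a + t • v) : E × V)) 0) := by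
      simpa using hL
    have hd : HasDerivAt (fun t : ℝ => F (x, a + t • v)) 0 0 := by
      have := hL'.comp_hasDerivAt (0 : ℝ) hcurve
      rw [hv] at this
      exact this
    have ht := (hasDerivAt_iff_tendsto_slope.1 hd).norm
    have hle : c * ‖v‖ ≤ ‖(0 : V)‖ := by
      refine ge_of_tendsto ht ?_
      filter_upwards [self_mem_nhdsWithin] with t ht0
      have ht0' : 0 < |t| := abs_pos.2 ht0
      have h1 := gif_anti hmono x (a + t • v) a
      rw [slope_def_module]
      simp only [sub_zero, zero_smul, add_zero, norm_smul, norm_inv, Real.norm_eq_abs]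
      simp only [add_sub_cancel_left, norm_smul, Real.norm_eq_abs] at h1
      rw [le_inv_mul_iff₀ ht0']
      linarith
    rw [norm_zero] at hle
    have : ‖v‖ ≤ 0 := by
      by_contra hcon
      push Not at hcon
      have := mul_pos hc hcon
      linarith
    simpa using this
  have hinj : Function.Injective (M : (E × V) →ₗ[ℝ] (E × V)) := by
    rw [injective_iff_map_eq_zero]
    rintro ⟨u, v⟩ huv
    have h2 : ((u, L (u, v)) : E × V) = 0 := huv
    have hu : u = 0 := congrArg Prod.fst h2
    subst hu
    have hv : v = 0 := hLv v (congrArg Prod.snd h2)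
    subst hv
    rfl
  refine ⟨(LinearEquiv.ofInjectiveEndo (M : (E × V) →ₗ[ℝ] (E × V)) hinj).toContinuousLinearEquiv,
    ?_⟩
  convert hG using 1
  ext w <;> rfl

theorem gif_surj {c : ℝ} (hc : 0 < c) {F : E × V → V}
    (hmono : ∀ (x : E) (a b : V), c * ‖a - b‖ ^ 2 ≤ ⟪F (x, a) - F (x, b), a - b⟫)
    (hF : ContDiff ℝ 1 F) (x : E) : Function.Surjective (fun a => F (x, a)) := by
  have hcont : Continuous (fun a => F (x, a)) := hF.continuous.comp (by fun_prop)
  have hGopen : IsOpenMap (fun w : E × V => (w.1, F w)) := by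
    rw [isOpenMap_iff_nhds_le]
    intro z
    obtain ⟨A, hA⟩ := gif_equiv hc hmono (hF.differentiable (by simp)) z
    have hG : ContDiffAt ℝ 1 (fun w : E × V => (w.1, F w)) z :=
      (contDiff_fst.prodMk hF).contDiffAt
    exact (hG.hasStrictFDerivAt' hA (by simp)).map_nhds_eq_of_equiv.ge
  have hopen : IsOpen (Set.range (fun a => F (x, a))) := by
    have : Set.range (fun a => F (x, a)) =
        (fun p : V => (x, p)) ⁻¹' Set.range (fun w : E × V => (w.1, F w)) := by
      ext p
      constructor
      · rintro ⟨a, rfl⟩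
        exact ⟨(x, a), rfl⟩
      · rintro ⟨⟨y, a⟩, h⟩
        have h1 : y = x := congrArg Prod.fst h
        subst h1
        exact ⟨a, congrArg Prod.snd h⟩
    rw [this]
    exact hGopen.isOpen_range.preimage (by fun_prop)
  have hanti : AntilipschitzWith (Real.toNNReal (1 / c)) (fun a => F (x, a)) := by
    refine AntilipschitzWith.of_le_mul_dist fun a b => ?_
    rw [Real.coe_toNNReal _ (by positivity), dist_eq_norm, dist_eq_norm, div_mul_eq_mul_div,
      one_mul, le_div_iff₀ hc]
    linarith [gif_anti hmono x a b]
  have : ProperSpace V := FiniteDimensional.proper ℝ V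
  have hclosed : IsClosed (Set.range (fun a => F (x, a))) := by
    refine (isProperMap_iff_tendsto_cocompact.2 ⟨hcont, ?_⟩).isClosedMap.isClosed_range
    rw [← Metric.cobounded_eq_cocompact]
    exact hanti.tendsto_cobounded
  exact Set.range_eq_univ.1 (IsClopen.eq_univ ⟨hclosed, hopen⟩ (Set.range_nonempty _))

end Helpers

/-- global implicit function theorem for uniformly monotone systems:
if `F : ℝⁿ × ℝᵐ → ℝᵐ` is `C^k` (`k ≥ 1`) and uniformly strongly monotone in its
second variable, then there is exactly one map `φ` with `F(x, φ(x,p)) = p` for all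
`(x,p)`; moreover `φ` is `C^k` and `p ↦ φ(x,p)` is Lipschitz with constant `1/c`. -/
theorem global_implicit_function_monotone (n m : ℕ) (hn : 0 < n) (hm : 0 < m)
    (c : ℝ) (hc : 0 < c) (k : ℕ∞) (hk : 1 ≤ k)
    (F : EuclideanSpace ℝ (Fin n) × EuclideanSpace ℝ (Fin m) → EuclideanSpace ℝ (Fin m))
    (hF : ContDiff ℝ k F)
    (hmono : ∀ (x : EuclideanSpace ℝ (Fin n)) (a b : EuclideanSpace ℝ (Fin m)),
      c * ‖a - b‖ ^ 2 ≤ ⟪F (x, a) - F (x, b), a - b⟫) :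
    (∃! φ : EuclideanSpace ℝ (Fin n) × EuclideanSpace ℝ (Fin m) → EuclideanSpace ℝ (Fin m),
        ∀ x p, F (x, φ (x, p)) = p) ∧
    (∀ φ : EuclideanSpace ℝ (Fin n) × EuclideanSpace ℝ (Fin m) → EuclideanSpace ℝ (Fin m),
        (∀ x p, F (x, φ (x, p)) = p) →
        ContDiff ℝ k φ ∧ ∀ x p q, ‖φ (x, p) - φ (x, q)‖ ≤ (1 / c) * ‖p - q‖) := by
  have hk0 : (k : WithTop ℕ∞) ≠ 0 := by
    intro h
    have : k = 0 := by exact_mod_cast h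
    subst this
    simp at hk
  have hF1 : ContDiff ℝ 1 F := hF.of_le (by exact_mod_cast hk)
  have hinj : ∀ x a b, F (x, a) = F (x, b) → a = b := by
    intro x a b h
    have h1 := gif_anti hmono x a b
    rw [h, sub_self, norm_zero] at h1
    have : ‖a - b‖ ≤ 0 := by
      by_contra hcon
      push Not at hcon
      have := mul_pos hc hcon
      linarith
    exact sub_eq_zero.1 (by simpa using this)
  refine ⟨?_, ?_⟩
  · choose g hg using fun x => gif_surj hc hmono hF1 x
    refine ⟨fun z => g z.1 z.2, fun x p => hg x p, ?_⟩
    intro ψ hψ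
    funext z
    exact hinj z.1 _ _ ((hψ z.1 z.2).trans (hg z.1 z.2).symm)
  · intro φ hφ
    refine ⟨?_, ?_⟩
    · rw [contDiff_iff_contDiffAt]
      rintro ⟨x, p⟩
      obtain ⟨A, hA⟩ := gif_equiv hc hmono (hF1.differentiable (by simp)) (x, φ (x, p))
      have hG : ContDiffAt ℝ k (fun w : EuclideanSpace ℝ (Fin n) × EuclideanSpace ℝ (Fin m) =>
          (w.1, F w)) (x, φ (x, p)) := (contDiff_fst.prodMk hF).contDiffAt
      have hinv := hG.to_localInverse hA hk0
      have hev := (hG.hasStrictFDerivAt' hA hk0).eventually_right_inverse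
      simp only [hφ] at hinv hev
      refine (contDiffAt_snd.comp _ hinv).congr_of_eventuallyEq ?_
      filter_upwards [hev] with y hy
      have h1 := congrArg Prod.fst hy
      have h2 := congrArg Prod.snd hy
      simp only at h1 h2
      refine hinj y.1 _ _ ((hφ y.1 y.2).trans ?_)
      refine h2.symm.trans (congrArg F ?_)
      exact Prod.ext h1 rfl
    · intro x p q
      have h1 := gif_anti hmono x (φ (x, p)) (φ (x, q))
      rw [hφ, hφ] at h1
      rw [div_mul_eq_mul_div, one_mul, le_div_iff₀ hc]
      linarith
end
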